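/- For a fixed n ≥ 3, the number of equivalence classes of set partition words p with N(p) = n distinct letters and length |p| = 2n + 1 such that φ_{aba}^{n−1}(p) is not sorted equals C(n+1, 2) + 2·C(n, 2). -/

import Mathlib

/-- West's stack-sorting map, implemented with an explicit stack (top = head). -/
def sWestAux : List ℕ → List ℕ → List ℕ
  | [], st => st
  | x :: xs, [] => sWestAux xs [x]
  | x :: xs, t :: st =>
      if t < x then t :: sWestAux (x :: xs) st
      else sWestAux xs (x :: t :: st)
termination_by l st => 2 * l.length + st.length

def sWest (l : List ℕ) : List ℕ := sWestAux l []

/-- A word contains a subsequence equivalent to `aba`. -/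
def HasABA (l : List ℕ) : Prop :=
  ∃ i j k : Fin l.length, i < j ∧ j < k ∧ l.get i = l.get k ∧ l.get j ≠ l.get i

instance (l : List ℕ) : Decidable (HasABA l) := by
  unfold HasABA; infer_instance

/-- Xia's stack-sorting map φ_{aba}, with explicit stack (top = head). -/
def phiAux : List ℕ → List ℕ → List ℕ
  | [], st => st
  | x :: xs, [] => phiAux xs [x]
  | x :: xs, t :: st =>
      if HasABA (x :: t :: st) then t :: phiAux (x :: xs) st
      else phiAux xs (x :: t :: st)
termination_by l st => 2 * l.length + st.length

def phi (p : List ℕ) : List ℕ := phiAux p []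

/-- A set partition word is sorted: all occurrences of each letter are consecutive. -/
def SortedWord (p : List ℕ) : Prop :=
  ∀ i j k : Fin p.length, i < j → j < k → p.get i = p.get k → p.get j = p.get i

/-- Number of distinct letters. -/
def Nletters (p : List ℕ) : ℕ := p.toFinset.card

def Avoids231 (l : List ℕ) : Prop :=
  ¬ ∃ i j k : Fin l.length, i < j ∧ j < k ∧ l.get k < l.get i ∧ l.get i < l.get j


/-- Canonical form of a set partition word: each letter is at most the number of
distinct letters seen before it (restricted growth condition), so each equivalence
class of words contains exactly one canonical representative. -/
def CanonicalWord (p : List ℕ) : Prop :=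
  ∀ i : Fin p.length, p.get i ≤ (p.take i).toFinset.card

/-!
Up to merging adjacent equal letters, one pass of `φ_{aba}` acts by `a u a v ↦ S(u) S(a v)`, where
`a ∉ u`, and `a s ↦ S(s) a`, where `a ∉ s`. The output has the same letters, no letter gains
occurrences, and if some letter is repeated then at least one repeated letter becomes single. Hence
a word that is unsorted after `j` passes has more than `j` repeated letters, and its length exceeds
its number of distinct letters by more than `j`.

For `n` letters, length `2n + 1` and `j = n - 1` these bounds are nearly tight. They force every
letter of `p` to be repeated and `p` to lose exactly two letters in the first pass, so that `S(p)`
consists of two blocks with the same `n - 1` distinct letters, followed by the first letter `a` of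
`p`. Tightness at every later pass forces the two blocks to be equal, and indeed each word `w w a`
stays unsorted for `n - 2` more passes. Thus the condition on `p` is that `S(p) = w w a`.

Solving this equation, either `a` occurs three times and `p = a lk a kt a tl`, or `a` occurs twice
and some letter `c` is tripled, `p = a lckct a lctk` or `p = a lckt a lctck`. In canonical form such
a word is determined by cutting the word `1 2 ⋯ (n - 1)` into `l, k, t`, respectively `l, c, k, t`,
which can be done in `C(n+1, 2)`, respectively `C(n, 2)`, ways.
-/

open scoped List

section Pattern

theorem hasABA_iff_sublist {l : List ℕ} : HasABA l ↔ ∃ a b, a ≠ b ∧ [a, b, a] <+ l := by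
  constructor
  · rintro ⟨i, j, k, hij, hjk, hik, hji⟩
    refine ⟨l.get i, l.get j, hji.symm, ?_⟩
    refine List.sublist_iff_exists_fin_orderEmbedding_get_eq.2
      ⟨OrderEmbedding.ofStrictMono ![i, j, k] ?_, ?_⟩
    · intro a b hab
      fin_cases a <;> fin_cases b <;> simp_all [hij.trans hjk]
    · intro a
      fin_cases a
      exacts [rfl, rfl, hik]
  · rintro ⟨a, b, hab, h⟩
    obtain ⟨f, hf⟩ := List.sublist_iff_exists_fin_orderEmbedding_get_eq.1 h
    have h₀ : a = l.get (f 0) := hf 0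
    have h₁ : b = l.get (f 1) := hf 1
    have h₂ : a = l.get (f 2) := hf 2
    exact ⟨f 0, f 1, f 2, f.strictMono (by simp), f.strictMono (by simp [Fin.lt_def]),
      h₀ ▸ h₂, h₀ ▸ h₁ ▸ hab.symm⟩

theorem not_sortedWord_iff_hasABA {l : List ℕ} : ¬ SortedWord l ↔ HasABA l := by
  simp only [SortedWord, HasABA]
  push Not
  rfl

theorem hasABA_cons {x : ℕ} {l : List ℕ} :
    HasABA (x :: l) ↔ HasABA l ∨ ∃ b, b ≠ x ∧ [b, x] <+ l := by
  simp only [hasABA_iff_sublist]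
  constructor
  · rintro ⟨a, b, hab, h⟩
    rcases List.sublist_cons_iff.1 h with h | ⟨r, hr, h⟩
    · exact .inl ⟨a, b, hab, h⟩
    · obtain ⟨rfl, rfl⟩ := List.cons.inj hr
      exact .inr ⟨b, hab.symm, h⟩
  · rintro (⟨a, b, hab, h⟩ | ⟨b, hb, h⟩)
    · exact ⟨a, b, hab, h.cons _⟩
    · exact ⟨x, b, hb.symm, h.cons_cons _⟩

theorem not_hasABA_of_nodup {l : List ℕ} (h : l.Nodup) : ¬ HasABA l := by
  rw [hasABA_iff_sublist]
  rintro ⟨a, b, -, hl⟩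
  simpa using h.sublist hl

theorem not_hasABA_replicate (k a : ℕ) : ¬ HasABA (List.replicate k a) := by
  rw [hasABA_iff_sublist]
  rintro ⟨x, y, hxy, hl⟩
  have hx := List.eq_of_mem_replicate (hl.subset (by simp : x ∈ [x, y, x]))
  have hy := List.eq_of_mem_replicate (hl.subset (by simp : y ∈ [x, y, x]))
  exact hxy (hx.trans hy.symm)

theorem hasABA_append_replicate {l : List ℕ} {a : ℕ} (ha : a ∉ l) (k : ℕ) :
    HasABA (l ++ List.replicate k a) ↔ HasABA l := by
  induction l with
  | nil => simpa using ⟨fun h => (not_hasABA_replicate k a h).elim,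
      fun h => (not_hasABA_of_nodup List.nodup_nil h).elim⟩
  | cons x l ih =>
    obtain ⟨hax, hal⟩ : a ≠ x ∧ a ∉ l := by simpa using ha
    have hpair (b : ℕ) : [b, x] <+ l ++ List.replicate k a ↔ [b, x] <+ l := by
      refine ⟨fun h => ?_, fun h => h.trans (List.sublist_append_left _ _)⟩
      obtain ⟨r, s, hrs, hr, hs⟩ := List.sublist_append_iff.1 h
      rcases List.eq_nil_or_concat s with rfl | ⟨s, y, rfl⟩
      · simpa [hrs] using hr
      · have hy : y = a := List.eq_of_mem_replicate (hs.subset (by simp))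
        have hxy : x = y := by simpa using congrArg List.getLast? hrs
        exact absurd (hy.symm.trans hxy.symm) hax
    simp only [List.cons_append, hasABA_cons, ih hal, hpair]

theorem hasABA_cons_cons_append_replicate {a t : ℕ} (h : t ≠ a) (st : List ℕ) (k : ℕ) :
    HasABA (a :: t :: (st ++ List.replicate (k + 1) a)) := by
  refine hasABA_cons.2 (.inr ⟨t, h, ?_⟩)
  simp [List.replicate_succ]

end Pattern

section Stack

theorem phiAux_push {x : ℕ} {st : List ℕ} (h : ¬ HasABA (x :: st)) (xs : List ℕ) :
    phiAux (x :: xs) st = phiAux xs (x :: st) := by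
  cases st with
  | nil => rw [phiAux]
  | cons t st => rw [phiAux, if_neg h]

theorem phiAux_pop {x t : ℕ} {st : List ℕ} (h : HasABA (x :: t :: st)) (xs : List ℕ) :
    phiAux (x :: xs) (t :: st) = t :: phiAux (x :: xs) st := by
  rw [phiAux, if_pos h]

theorem phiAux_replicate_append (i j a : ℕ) (s : List ℕ) :
    phiAux (List.replicate i a ++ s) (List.replicate j a) =
      phiAux s (List.replicate (i + j) a) := by
  induction i generalizing j with
  | zero => simp
  | succ i ih =>
    have hpush : ¬ HasABA (a :: List.replicate j a) := not_hasABA_replicate (j + 1) a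
    rw [List.replicate_succ, List.cons_append, phiAux_push hpush, ← List.replicate_succ, ih,
      Nat.add_right_comm i 1 j, Nat.add_assoc]

theorem not_hasABA_cons_replicate {a x : ℕ} (h : a ≠ x) (k : ℕ) :
    ¬ HasABA (x :: List.replicate k a) :=
  (hasABA_append_replicate (l := [x]) (by simpa using h) k).not.2
    (not_hasABA_of_nodup (List.nodup_singleton x))

theorem phiAux_append_replicate {a : ℕ} (k : ℕ) (xs st : List ℕ) (hxs : a ∉ xs) (hst : a ∉ st) :
    phiAux xs (st ++ List.replicate k a) = phiAux xs st ++ List.replicate k a := by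
  induction xs, st using phiAux.induct with
  | case1 st => simp [phiAux]
  | case2 x xs ih =>
    obtain ⟨hx, hxs⟩ : a ≠ x ∧ a ∉ xs := by simpa using hxs
    rw [List.nil_append, phiAux_push (not_hasABA_cons_replicate hx k), phiAux]
    exact ih hxs (by simpa using hx)
  | case3 x xs t st h ih =>
    have hst' : a ∉ st := fun ha => hst (List.mem_cons_of_mem t ha)
    rw [List.cons_append, phiAux_pop h, phiAux_pop, ih hxs hst', List.cons_append]
    exact (hasABA_append_replicate (l := x :: t :: st) (by simp_all) k).2 h
  | case4 x xs t st h ih =>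
    have hall : a ∉ x :: t :: st := by simp_all
    have hpush : ¬ HasABA (x :: (t :: st ++ List.replicate k a)) :=
      (hasABA_append_replicate hall k).not.2 h
    rw [phiAux_push h, phiAux_push hpush]
    exact ih (by simp_all) hall

theorem phiAux_append_cons_append_replicate {a : ℕ} (k : ℕ) (v xs st : List ℕ) (hxs : a ∉ xs)
    (hst : a ∉ st) :
    phiAux (xs ++ a :: v) (st ++ List.replicate (k + 1) a) =
      phiAux xs st ++ phiAux v (List.replicate (k + 2) a) := by
  induction xs, st using phiAux.induct with
  | case1 st =>
    rw [List.nil_append, phiAux]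
    induction st with
    | nil =>
      rw [List.nil_append, phiAux_push (not_hasABA_replicate (k + 2) a), List.nil_append,
        ← List.replicate_succ]
    | cons t st ih =>
      obtain ⟨ht, hst⟩ : a ≠ t ∧ a ∉ st := by simpa using hst
      rw [List.cons_append, phiAux_pop (hasABA_cons_cons_append_replicate ht.symm st k), ih hst,
        List.cons_append]
  | case2 x xs ih =>
    obtain ⟨hx, hxs⟩ : a ≠ x ∧ a ∉ xs := by simpa using hxs
    rw [List.nil_append, List.cons_append, phiAux_push (not_hasABA_cons_replicate hx (k + 1)),
      phiAux]
    exact ih hxs (by simpa using hx)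
  | case3 x xs t st h ih =>
    have hst' : a ∉ st := fun ha => hst (List.mem_cons_of_mem t ha)
    rw [List.cons_append, List.cons_append, phiAux_pop h, phiAux_pop, ← List.cons_append,
      ih hxs hst', List.cons_append]
    exact (hasABA_append_replicate (l := x :: t :: st) (by simp_all) (k + 1)).2 h
  | case4 x xs t st h ih =>
    have hall : a ∉ x :: t :: st := by simp_all
    have hpush : ¬ HasABA (x :: (t :: st ++ List.replicate (k + 1) a)) :=
      (hasABA_append_replicate hall (k + 1)).not.2 h
    rw [phiAux_push h, List.cons_append, phiAux_push hpush]
    exact ih (by simp_all) hall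

theorem phi_replicate_append {a : ℕ} {s : List ℕ} (h : a ∉ s) (k : ℕ) :
    phi (List.replicate k a ++ s) = phi s ++ List.replicate k a := by
  have hstack := phiAux_append_replicate k s [] h (by simp)
  rw [phi, phi, ← hstack, List.nil_append]
  simpa using phiAux_replicate_append k 0 a s

theorem phi_replicate_append_append_cons {a : ℕ} {u : List ℕ} (h : a ∉ u) (k : ℕ) (v : List ℕ) :
    phi (List.replicate (k + 1) a ++ (u ++ a :: v)) =
      phi u ++ phi (List.replicate (k + 2) a ++ v) := by
  have hload (i : ℕ) (s : List ℕ) :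
      phi (List.replicate i a ++ s) = phiAux s (List.replicate i a) := by
    simpa [phi] using phiAux_replicate_append i 0 a s
  rw [hload, hload]
  exact phiAux_append_cons_append_replicate k v u [] h (by simp)

end Stack

section Sweep

@[elab_as_elim]
theorem firstReturn_induction {α : Type*} {motive : List α → Prop} (s : List α) (nil : motive [])
    (fresh : ∀ a s, a ∉ s → motive s → motive (a :: s))
    (returning : ∀ a u v, a ∉ u → motive u → motive (a :: v) → motive (a :: (u ++ a :: v))) :
    motive s := by
  induction hn : s.length using Nat.strong_induction_on generalizing s with
  | _ n ih =>
    subst hn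
    rcases s with _ | ⟨a, s⟩
    · exact nil
    · by_cases ha : a ∈ s
      · obtain ⟨u, v, rfl, hu⟩ := List.eq_append_cons_of_mem ha
        exact returning a u v hu (ih _ (by simp) u rfl) (ih _ (by simp) _ rfl)
      · exact fresh a s ha (ih _ (by simp) s rfl)

variable {α : Type*} [DecidableEq α]

/-- One pass of the `aba`-avoiding stack in which the copies of a letter that lie together in the
stack are merged into one: the word `a :: s` is cut at the first return of the letter `a`. -/
def sweep : List α → List α
  | [] => []
  | a :: s =>
    sweep (s.takeWhile (· ≠ a)) ++ if a ∈ s then sweep (s.dropWhile (· ≠ a)) else [a]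
termination_by s => s.length
decreasing_by
  · exact Nat.lt_succ_of_le (List.takeWhile_prefix _).length_le
  · exact Nat.lt_succ_of_le (List.dropWhile_suffix _).length_le

@[simp]
theorem sweep_nil : sweep ([] : List α) = [] := by rw [sweep]

theorem sweep_cons_of_notMem {a : α} {s : List α} (h : a ∉ s) :
    sweep (a :: s) = sweep s ++ [a] := by
  have htake : s.takeWhile (· ≠ a) = s :=
    List.takeWhile_eq_self_iff.2 fun x hx => by simpa using ne_of_mem_of_not_mem hx h
  rw [sweep, htake, if_neg h]

theorem sweep_cons_append_cons {a : α} {u : List α} (h : a ∉ u) (v : List α) :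
    sweep (a :: (u ++ a :: v)) = sweep u ++ sweep (a :: v) := by
  have hne : ∀ x ∈ u, decide (x ≠ a) = true := fun x hx => by simpa using ne_of_mem_of_not_mem hx h
  rw [sweep, List.takeWhile_append_of_pos hne, List.dropWhile_append_of_pos hne, if_pos (by simp)]
  simp

theorem mem_sweep {x : α} {s : List α} : x ∈ sweep s ↔ x ∈ s := by
  induction s using firstReturn_induction with
  | nil => simp
  | fresh a s ha ih => simp [sweep_cons_of_notMem ha, ih, or_comm]
  | returning a u v ha ihu ihv =>
    simp only [sweep_cons_append_cons ha, List.mem_append, ihu, ihv, List.mem_cons]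
    tauto

theorem toFinset_sweep (s : List α) : (sweep s).toFinset = s.toFinset := by
  ext x
  simp [mem_sweep]

theorem count_sweep_le (x : α) (s : List α) : (sweep s).count x ≤ s.count x := by
  induction s using firstReturn_induction with
  | nil => simp
  | fresh a s ha ih => simpa [sweep_cons_of_notMem ha, List.count_cons] using ih
  | returning a u v ha ihu ihv =>
    simp only [sweep_cons_append_cons ha, List.count_append, List.count_cons] at ihv ⊢
    omega

theorem length_sweep_le (s : List α) : (sweep s).length ≤ s.length := by
  induction s using firstReturn_induction with
  | nil => simp
  | fresh a s ha ih => simpa [sweep_cons_of_notMem ha] using ih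
  | returning a u v ha ihu ihv =>
    simp only [sweep_cons_append_cons ha, List.length_append, List.length_cons] at ihv ⊢
    omega

theorem sweep_cons_eq_concat (a : α) (s : List α) : ∃ l, sweep (a :: s) = l ++ [a] ∧ a ∉ l := by
  induction hs : a :: s using firstReturn_induction generalizing s with
  | nil => cases hs
  | fresh b t hb ih =>
    obtain ⟨rfl, rfl⟩ := List.cons.inj hs
    exact ⟨sweep s, sweep_cons_of_notMem hb, mem_sweep.not.2 hb⟩
  | returning b u v hb _ ihv =>
    obtain ⟨rfl, rfl⟩ := List.cons.inj hs
    obtain ⟨l, hl, hal⟩ := ihv v rfl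
    refine ⟨sweep u ++ l, ?_, by simp [mem_sweep, hb, hal]⟩
    rw [sweep_cons_append_cons hb, hl, List.append_assoc]

theorem sweep_append_of_nodup {u v : List α} (hu : u.Nodup) (h : u.Disjoint v) :
    sweep (u ++ v) = sweep v ++ u.reverse := by
  induction u with
  | nil => simp
  | cons a u ih =>
    obtain ⟨hau, hu⟩ := List.nodup_cons.1 hu
    obtain ⟨hav, h⟩ := List.disjoint_cons_left.1 h
    rw [List.cons_append, sweep_cons_of_notMem (by simp [hau, hav]), ih hu h]
    simp

theorem sweep_of_nodup {u : List α} (h : u.Nodup) : sweep u = u.reverse := by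
  simpa using sweep_append_of_nodup h (List.disjoint_nil_right u)

theorem length_sweep_lt_of_not_nodup {s : List α} (h : ¬ s.Nodup) :
    (sweep s).length < s.length := by
  induction s using firstReturn_induction with
  | nil => simp at h
  | fresh a s ha ih =>
    simpa [sweep_cons_of_notMem ha] using ih fun hs => h (hs.cons ha)
  | returning a u v ha _ _ =>
    have hu := length_sweep_le u
    have hv := length_sweep_le (a :: v)
    simp only [sweep_cons_append_cons ha, List.length_append, List.length_cons] at hv ⊢
    omega

theorem nodup_of_length_le_length_sweep {s : List α} (h : s.length ≤ (sweep s).length) :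
    s.Nodup := by
  by_contra hs
  exact (length_sweep_lt_of_not_nodup hs).not_ge h

theorem exists_count_sweep_eq_one {s : List α} (h : ¬ s.Nodup) :
    ∃ x, 2 ≤ s.count x ∧ (sweep s).count x = 1 := by
  induction s using firstReturn_induction with
  | nil => simp at h
  | fresh a s ha ih =>
    obtain ⟨x, hx, hx'⟩ := ih fun hs => h (hs.cons ha)
    have hax : a ≠ x := by
      rintro rfl
      simp [List.count_eq_zero_of_not_mem ha] at hx
    exact ⟨x, by simpa [hax] using hx, by simpa [sweep_cons_of_notMem ha, hax] using hx'⟩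
  | returning a u v ha _ _ =>
    obtain ⟨l, hl, hal⟩ := sweep_cons_eq_concat a v
    refine ⟨a, by simp only [List.count_cons_self, List.count_append]; omega, ?_⟩
    rw [sweep_cons_append_cons ha, hl]
    simp [List.count_eq_zero_of_not_mem, mem_sweep, ha, hal]

end Sweep

section Stutters

variable {α : Type*}

/-- `Stutters p q` says that `p` arises from `q` by repeating letters in place. The stack passes
`phi` and `sweep` agree up to this relation. -/
inductive Stutters : List α → List α → Prop
  | nil : Stutters [] []
  | cons (a : α) (k : ℕ) {p q : List α} :
      Stutters p q → Stutters (List.replicate (k + 1) a ++ p) (a :: q)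

namespace Stutters

theorem refl (p : List α) : Stutters p p := by
  induction p with
  | nil => exact nil
  | cons a p ih => exact cons a 0 ih

theorem append {p q p' q' : List α} (h : Stutters p q) (h' : Stutters p' q') :
    Stutters (p ++ p') (q ++ q') := by
  induction h with
  | nil => exact h'
  | cons a k _ ih => simpa using cons a k ih

theorem exists_of_append {p u v : List α} (h : Stutters p (u ++ v)) :
    ∃ p₁ p₂, p = p₁ ++ p₂ ∧ Stutters p₁ u ∧ Stutters p₂ v := by
  induction u generalizing p with
  | nil => exact ⟨[], p, rfl, nil, h⟩
  | cons a u ih =>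
    cases h with
    | cons _ k h =>
      obtain ⟨p₁, p₂, rfl, hu, hv⟩ := ih h
      exact ⟨List.replicate (k + 1) a ++ p₁, p₂, by simp, hu.cons a k, hv⟩

theorem mem_iff {p q : List α} (h : Stutters p q) (x : α) : x ∈ p ↔ x ∈ q := by
  induction h with
  | nil => rfl
  | cons a k _ ih => simp [ih]

theorem sublist {p q : List α} (h : Stutters p q) : q <+ p := by
  induction h with
  | nil => exact List.Sublist.refl []
  | cons a k _ ih =>
    rw [List.replicate_succ, List.cons_append]
    exact (ih.trans (List.sublist_append_right _ _)).cons_cons a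

theorem sublist_of_isChain_ne {p q l : List α} (h : Stutters p q) (hl : l.IsChain (· ≠ ·))
    (hlp : l <+ p) : l <+ q := by
  induction h generalizing l with
  | nil => exact hlp
  | cons a k _ ih =>
    obtain ⟨l₁, l₂, rfl, h₁, h₂⟩ := List.sublist_append_iff.1 hlp
    obtain ⟨m, -, rfl⟩ := List.sublist_replicate_iff.1 h₁
    have hl₂ := ih hl.right_of_append h₂
    rcases m with _ | _ | m
    · exact hl₂.cons a
    · exact hl₂.cons_cons a
    · simp [List.replicate_succ] at hl

theorem hasABA_iff {p q : List ℕ} (h : Stutters p q) : HasABA p ↔ HasABA q := by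
  simp only [hasABA_iff_sublist]
  constructor
  · rintro ⟨a, b, hab, hp⟩
    exact ⟨a, b, hab, h.sublist_of_isChain_ne (by simp [hab, hab.symm]) hp⟩
  · rintro ⟨a, b, hab, hq⟩
    exact ⟨a, b, hab, hq.trans h.sublist⟩

theorem phi_sweep {p q : List ℕ} (h : Stutters p q) : Stutters (phi p) (sweep q) := by
  induction q using firstReturn_induction generalizing p with
  | nil =>
    cases h
    simpa [phi, phiAux] using nil
  | fresh a s ha ih =>
    cases h with
    | cons _ k h =>
      rw [phi_replicate_append ((h.mem_iff a).not.2 ha), sweep_cons_of_notMem ha]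
      simpa using (ih h).append (nil.cons a k)
  | returning a u v ha ihu ihv =>
    cases h with
    | cons _ k h =>
      obtain ⟨p₁, p₂, rfl, h₁, h₂⟩ := h.exists_of_append
      cases h₂ with
      | cons _ j h₂ =>
        rw [List.replicate_succ (n := j), List.cons_append,
          phi_replicate_append_append_cons ((h₁.mem_iff a).not.2 ha), sweep_cons_append_cons ha,
          ← List.append_assoc (List.replicate _ a), List.replicate_append_replicate]
        refine (ihu h₁).append (ihv ?_)
        rw [show k + 2 + j = k + 1 + j + 1 by omega]
        exact h₂.cons a (k + 1 + j)

theorem iterate_phi_iterate_sweep {p q : List ℕ} (h : Stutters p q) (j : ℕ) :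
    Stutters (phi^[j] p) (sweep^[j] q) := by
  induction j generalizing p q with
  | zero => exact h
  | succ _ ih => exact ih h.phi_sweep

end Stutters

/-- The word `p` still contains `aba` after `j` sweeps, equivalently after `j` passes of `phi`. -/
def UnsortedAfter (j : ℕ) (p : List ℕ) : Prop := HasABA (sweep^[j] p)

theorem not_sortedWord_iterate_phi_iff {j : ℕ} {p : List ℕ} :
    ¬ SortedWord (phi^[j] p) ↔ UnsortedAfter j p :=
  not_sortedWord_iff_hasABA.trans ((Stutters.refl p).iterate_phi_iterate_sweep j).hasABA_iff

theorem unsortedAfter_succ {j : ℕ} {p : List ℕ} :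
    UnsortedAfter (j + 1) p ↔ UnsortedAfter j (sweep p) := Iff.rfl

end Stutters

section Repeated

variable {α : Type*} [DecidableEq α]

/-- The letters occurring at least twice in a word. Each sweep of a word with a repeated letter
removes at least one of them. -/
def repeated (p : List α) : Finset α := {x ∈ p.toFinset | 2 ≤ p.count x}

theorem mem_repeated {p : List α} {x : α} : x ∈ repeated p ↔ 2 ≤ p.count x := by
  simp only [repeated, Finset.mem_filter, List.mem_toFinset, and_iff_right_iff_imp]
  exact fun h => List.count_pos_iff.1 (by omega)

theorem repeated_eq_empty_of_nodup {p : List α} (h : p.Nodup) : repeated p = ∅ := by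
  refine Finset.eq_empty_of_forall_notMem fun x hx => ?_
  exact absurd (List.nodup_iff_count_le_one.1 h x) (Nat.not_le.2 (mem_repeated.1 hx))

theorem repeated_sweep_ssubset {p : List α} (h : ¬ p.Nodup) : repeated (sweep p) ⊂ repeated p := by
  obtain ⟨x, hx, hx'⟩ := exists_count_sweep_eq_one h
  refine Finset.ssubset_iff_exists_subset_erase.2
    ⟨x, mem_repeated.2 hx, fun y hy => Finset.mem_erase.2 ⟨?_, ?_⟩⟩
  · rintro rfl
    exact absurd (mem_repeated.1 hy) (by simp [hx'])
  · exact mem_repeated.2 ((mem_repeated.1 hy).trans (count_sweep_le y p))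

theorem card_toFinset_add_card_repeated_le (p : List α) :
    p.toFinset.card + (repeated p).card ≤ p.length := by
  rw [← List.sum_toFinset_count_eq_length p, repeated, Finset.card_filter,
    Finset.card_eq_sum_ones, ← Finset.sum_add_distrib]
  refine Finset.sum_le_sum fun x hx => ?_
  have hpos := List.count_pos_iff.2 (List.mem_toFinset.1 hx)
  split_ifs <;> omega

theorem lt_card_repeated_of_unsortedAfter {j : ℕ} {p : List ℕ} (h : UnsortedAfter j p) :
    j < (repeated p).card := by
  induction j generalizing p with
  | zero =>
    obtain ⟨a, b, -, hab⟩ := hasABA_iff_sublist.1 h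
    refine Finset.card_pos.2 ⟨a, mem_repeated.2 ?_⟩
    exact le_trans (by simp [List.count_cons]) (hab.count_le a)
  | succ j ih =>
    have hj := ih (unsortedAfter_succ.1 h)
    by_cases hp : p.Nodup
    · have hnd : (sweep p).Nodup := by rwa [sweep_of_nodup hp, List.nodup_reverse]
      simp [repeated_eq_empty_of_nodup hnd] at hj
    · exact (Nat.succ_le_of_lt hj).trans_lt (Finset.card_lt_card (repeated_sweep_ssubset hp))

theorem card_toFinset_add_lt_length_of_unsortedAfter {j : ℕ} {p : List ℕ}
    (h : UnsortedAfter j p) : p.toFinset.card + j < p.length :=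
  (Nat.add_lt_add_left (lt_card_repeated_of_unsortedAfter h) _).trans_le
    (card_toFinset_add_card_repeated_le p)

theorem card_toFinset_add_lt_length_sweep_of_unsortedAfter {j : ℕ} {p : List ℕ}
    (h : UnsortedAfter (j + 1) p) : p.toFinset.card + j < (sweep p).length := by
  rw [← toFinset_sweep]
  exact card_toFinset_add_lt_length_of_unsortedAfter (unsortedAfter_succ.1 h)

end Repeated

section Sandwich

theorem sweep_append_cons_append_cons {α : Type*} [DecidableEq α] {b : α} {x u v : List α}
    (hx : x.Nodup) (hxu : x.Disjoint (b :: (u ++ v))) (hu : b ∉ u) :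
    sweep (x ++ b :: (u ++ b :: v)) = sweep u ++ sweep (b :: v) ++ x.reverse := by
  rw [sweep_append_of_nodup hx, sweep_cons_append_cons hu]
  intro y hy hy'
  exact hxu hy (by simpa [or_left_comm] using hy')

theorem sweep_sandwich {α : Type*} [DecidableEq α] {b : α} {x s y t z : List α} (hst : s ~ t)
    (h : (x ++ b :: s ++ y ++ z).Nodup) :
    sweep (x ++ b :: s ++ y ++ b :: t ++ z) =
      y.reverse ++ s.reverse ++ z.reverse ++ t.reverse ++ b :: x.reverse := by
  have hmem (c : α) : c ∈ t ↔ c ∈ s := hst.mem_iff.symm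
  obtain ⟨hx, hrest, hdisj⟩ :
      x.Nodup ∧ (b :: (s ++ y ++ z)).Nodup ∧ x.Disjoint (b :: (s ++ y ++ z)) :=
    List.nodup_append'.1 (by simpa using h)
  obtain ⟨hb, hsyz⟩ := List.nodup_cons.1 hrest
  have hsy : (s ++ y).Nodup := hsyz.of_append_left
  have htz : (b :: (t ++ z)).Nodup :=
    ((hst.append_right z).cons b).nodup_iff.1 (hrest.sublist (by simp))
  have hdisj' : x.Disjoint (b :: (s ++ y ++ (t ++ z))) := by
    refine List.disjoint_of_subset_right (fun c => ?_) hdisj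
    simp only [List.mem_cons, List.mem_append, hmem]
    tauto
  have hb' : b ∉ s ++ y := fun hb' => hb (List.mem_append_left z hb')
  have hword : x ++ b :: s ++ y ++ b :: t ++ z = x ++ b :: (s ++ y ++ b :: (t ++ z)) := by simp
  rw [hword, sweep_append_cons_append_cons hx hdisj' hb', sweep_of_nodup hsy, sweep_of_nodup htz]
  simp

theorem nodup_sandwich_step {α : Type*} {b : α} {x s y z : List α}
    (h : (x ++ b :: s ++ y ++ z).Nodup) :
    (y.reverse ++ s.reverse ++ z.reverse ++ b :: x.reverse).Nodup := by
  simp only [List.nodup_append, List.nodup_cons, List.nodup_reverse, List.mem_reverse] at h ⊢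
  grind

theorem eq_nil_of_unsortedAfter_sandwich {k b : ℕ} {x s y t₁ t₂ z : List ℕ}
    (hs : s.length = k + 1) (hst : s ~ t₁ ++ t₂) (hnd : (x ++ b :: s ++ y ++ z).Nodup)
    (h : UnsortedAfter (k + 1) (x ++ b :: s ++ y ++ (t₁ ++ b :: t₂) ++ z)) : t₁ = [] := by
  have hmem (c : ℕ) : c ∈ s ↔ c ∈ t₁ ∨ c ∈ t₂ := hst.mem_iff.trans List.mem_append
  obtain ⟨hx, hrest, hdisj⟩ :
      x.Nodup ∧ (b :: (s ++ y ++ z)).Nodup ∧ x.Disjoint (b :: (s ++ y ++ z)) :=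
    List.nodup_append'.1 (by simpa using hnd)
  have hdisj' : x.Disjoint (b :: (s ++ y ++ t₁ ++ (t₂ ++ z))) := by
    refine List.disjoint_of_subset_right (fun c => ?_) hdisj
    simp only [List.mem_cons, List.mem_append, hmem]
    tauto
  have hb : b ∉ s ++ y ++ t₁ := by
    refine fun hb => (List.nodup_cons.1 hrest).1 ?_
    simp only [List.mem_append, hmem] at hb ⊢
    tauto
  have hword : x ++ b :: s ++ y ++ (t₁ ++ b :: t₂) ++ z =
      x ++ b :: (s ++ y ++ t₁ ++ b :: (t₂ ++ z)) := by simp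
  have hletters : (x ++ b :: (s ++ y ++ t₁ ++ b :: (t₂ ++ z))).toFinset =
      (x ++ b :: s ++ y ++ z).toFinset := by
    ext c
    simp only [List.mem_toFinset, List.mem_append, List.mem_cons, hmem]
    tauto
  have hlong := card_toFinset_add_lt_length_sweep_of_unsortedAfter (hword ▸ h)
  have htail := length_sweep_le (b :: (t₂ ++ z))
  have hsplit := hst.length_eq
  rw [hletters, List.toFinset_card_of_nodup hnd,
    sweep_append_cons_append_cons hx hdisj' hb] at hlong
  simp only [List.length_append, List.length_cons, List.length_reverse] at hlong htail hsplit
  have hhead : (s ++ y ++ t₁).Nodup := by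
    refine nodup_of_length_le_length_sweep ?_
    simp only [List.length_append]
    omega
  refine List.eq_nil_iff_forall_not_mem.2 fun c hc => ?_
  exact List.disjoint_of_nodup_append hhead (List.mem_append_left y ((hmem c).2 (.inl hc))) hc

theorem eq_of_unsortedAfter_sandwich {k : ℕ} {x s y t z : List ℕ} (hs : s.length = k + 1)
    (hst : s ~ t) (hnd : (x ++ s ++ y ++ z).Nodup) (h : UnsortedAfter k (x ++ s ++ y ++ t ++ z)) :
    s = t := by
  induction k generalizing x s y t z with
  | zero =>
    obtain ⟨a, rfl⟩ := List.length_eq_one_iff.1 hs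
    exact (List.perm_singleton.1 hst.symm).symm
  | succ k ih =>
    obtain ⟨b, s, rfl⟩ := List.exists_cons_of_length_eq_add_one hs
    have hs' : s.length = k + 1 := by simpa using hs
    obtain ⟨t₁, t₂, rfl, -⟩ := List.eq_append_cons_of_mem (hst.mem_iff.1 List.mem_cons_self)
    have hperm : s ~ t₁ ++ t₂ := (hst.trans List.perm_middle).cons_inv
    obtain rfl := eq_nil_of_unsortedAfter_sandwich hs' hperm hnd h
    rw [List.nil_append] at h hperm
    rw [unsortedAfter_succ, sweep_sandwich hperm hnd] at h
    have hnd' := nodup_sandwich_step hnd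
    have hrec : s.reverse = t₂.reverse := ih (by simpa using hs') (by simpa using hperm) hnd' h
    rw [List.nil_append, List.reverse_injective hrec]

theorem unsortedAfter_sandwich {k : ℕ} {x w y z : List ℕ} (hw : w.length = k + 1) (hy : y ≠ [])
    (hz : z ≠ []) (hnd : (x ++ w ++ y ++ z).Nodup) :
    UnsortedAfter k (x ++ w ++ y ++ w ++ z) := by
  induction k generalizing x w y z with
  | zero =>
    obtain ⟨a, rfl⟩ := List.length_eq_one_iff.1 hw
    obtain ⟨b, y, rfl⟩ := List.exists_cons_of_ne_nil hy
    refine hasABA_iff_sublist.2 ⟨a, b, ?_, ?_⟩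
    · rintro rfl
      simp [List.nodup_append] at hnd
    · simp
  | succ k ih =>
    obtain ⟨b, w, rfl⟩ := List.exists_cons_of_length_eq_add_one hw
    rw [unsortedAfter_succ, sweep_sandwich (List.Perm.refl w) hnd]
    exact ih (by simpa using hw) (by simpa using hz) (by simp) (nodup_sandwich_step hnd)

theorem unsortedAfter_square_concat {k : ℕ} {w : List ℕ} {a : ℕ} (hw : w.length = k + 2)
    (hnd : (w ++ [a]).Nodup) : UnsortedAfter (k + 1) (w ++ w ++ [a]) := by
  obtain ⟨b, w, rfl⟩ := List.exists_cons_of_length_eq_add_one hw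
  have hnd' : ([] ++ b :: w ++ [] ++ [a]).Nodup := by simpa using hnd
  have hstep : sweep (b :: w ++ b :: w ++ [a]) = [] ++ w.reverse ++ [a] ++ w.reverse ++ [b] := by
    simpa only [List.nil_append, List.append_nil, List.reverse_nil, List.reverse_singleton]
      using sweep_sandwich (List.Perm.refl w) hnd'
  rw [unsortedAfter_succ, hstep]
  refine unsortedAfter_sandwich (by simpa using hw) (by simp) (by simp) ?_
  simpa using nodup_sandwich_step hnd'

theorem repeated_append_singleton_subset {α : Type*} [DecidableEq α] (a : α) (l : List α) :
    repeated (l ++ [a]) ⊆ l.toFinset := by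
  intro c hc
  have hcount := mem_repeated.1 hc
  by_contra hcl
  have hcl' : c ∉ l := List.mem_toFinset.not.1 hcl
  rw [List.count_append, List.count_eq_zero_of_not_mem hcl', zero_add] at hcount
  exact absurd (hcount.trans List.count_le_length) (by simp)

theorem toFinset_subset_repeated_of_unsortedAfter_concat {m a : ℕ} {l : List ℕ}
    (hcard : l.toFinset.card = m + 1) (h : UnsortedAfter m (l ++ [a])) :
    l.toFinset ⊆ repeated (l ++ [a]) := by
  have hlt := lt_card_repeated_of_unsortedAfter h
  exact (Finset.eq_of_subset_of_card_le (repeated_append_singleton_subset a l)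
    (by omega)).symm.subset

theorem exists_append_cons_of_mem_repeated {α : Type*} [DecidableEq α] {b : α} {l : List α}
    (h : b ∈ repeated (b :: l)) : ∃ u v, l = u ++ b :: v ∧ b ∉ u := by
  have hcount := mem_repeated.1 h
  rw [List.count_cons_self] at hcount
  exact List.eq_append_cons_of_mem (List.count_pos_iff.1 (by omega))

theorem perm_of_nodup_of_subset_of_card {α : Type*} {s t : List α} {F : Finset α}
    (hs : s.Nodup) (ht : t.Nodup) (hsF : ∀ c ∈ s, c ∈ F) (htF : ∀ c ∈ t, c ∈ F)
    (hcard : s.length + t.length = 2 * F.card) : s ~ t := by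
  classical
  have hsF' : s.toFinset ⊆ F := fun c hc => hsF c (List.mem_toFinset.1 hc)
  have htF' : t.toFinset ⊆ F := fun c hc => htF c (List.mem_toFinset.1 hc)
  have hs_le := Finset.card_le_card hsF'
  have ht_le := Finset.card_le_card htF'
  rw [List.toFinset_card_of_nodup hs] at hs_le
  rw [List.toFinset_card_of_nodup ht] at ht_le
  have hs_eq := Finset.eq_of_subset_of_card_le hsF'
    (by rw [List.toFinset_card_of_nodup hs]; omega)
  have ht_eq := Finset.eq_of_subset_of_card_le htF'
    (by rw [List.toFinset_card_of_nodup ht]; omega)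
  exact List.perm_of_nodup_nodup_toFinset_eq hs ht (hs_eq.trans ht_eq.symm)

theorem exists_perm_halves_of_unsortedAfter_concat {m a : ℕ} {l : List ℕ} (ha : a ∉ l)
    (hlen : l.length = 2 * (m + 2)) (hcard : l.toFinset.card = m + 2)
    (h : UnsortedAfter (m + 1) (l ++ [a])) : ∃ s t, l = s ++ t ∧ s.Nodup ∧ s ~ t := by
  have hrep := toFinset_subset_repeated_of_unsortedAfter_concat hcard h
  have hcard' : (l ++ [a]).toFinset.card = m + 3 := by
    rw [List.toFinset_eq_of_perm _ _ (List.perm_append_singleton a l), List.toFinset_cons,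
      Finset.card_insert_of_notMem (by simpa using ha), hcard]
  obtain ⟨b, l, rfl⟩ := List.exists_cons_of_length_eq_add_one hlen
  obtain ⟨u, v, rfl, hu⟩ : ∃ u v, l = u ++ b :: v ∧ b ∉ u := by
    obtain ⟨hab, -⟩ : a ≠ b ∧ a ∉ l := by simpa using ha
    refine exists_append_cons_of_mem_repeated (mem_repeated.2 ?_)
    simpa [hab] using mem_repeated.1 (hrep (List.mem_toFinset.2 List.mem_cons_self))
  have hsweep : sweep (b :: (u ++ b :: v) ++ [a]) = sweep u ++ sweep (b :: (v ++ [a])) := by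
    simpa using sweep_cons_append_cons hu (v ++ [a])
  have hlong := card_toFinset_add_lt_length_sweep_of_unsortedAfter h
  have hu_le := length_sweep_le u
  have hv_le := length_sweep_le (b :: (v ++ [a]))
  rw [hsweep, hcard'] at hlong
  simp only [List.length_append, List.length_cons, List.length_nil] at hlong hu_le hv_le hlen
  have hu_nodup : u.Nodup := nodup_of_length_le_length_sweep (by omega)
  have hv_nodup : (b :: (v ++ [a])).Nodup :=
    nodup_of_length_le_length_sweep
      (by simp only [List.length_append, List.length_cons, List.length_nil]; omega)
  have hbu : (b :: u).Nodup := hu_nodup.cons hu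
  refine ⟨b :: u, b :: v, rfl, hbu, perm_of_nodup_of_subset_of_card
    (F := (b :: (u ++ b :: v)).toFinset) hbu (hv_nodup.sublist (by simp)) ?_ ?_ ?_⟩
  · exact fun c hc => List.mem_toFinset.2 (List.mem_append_left (bs := b :: v) hc)
  · exact fun c hc => List.mem_toFinset.2 (List.mem_append_right (as := b :: u) hc)
  · simp only [List.length_cons]
    omega

theorem eq_square_of_unsortedAfter_concat {m a : ℕ} {l : List ℕ} (ha : a ∉ l)
    (hlen : l.length = 2 * (m + 2)) (hcard : l.toFinset.card = m + 2)
    (h : UnsortedAfter (m + 1) (l ++ [a])) : ∃ w, l = w ++ w ∧ (w ++ [a]).Nodup := by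
  obtain ⟨s, t, rfl, hs, hst⟩ := exists_perm_halves_of_unsortedAfter_concat ha hlen hcard h
  have hslen : s.length = m + 2 := by
    have hst_len := hst.length_eq
    rw [List.length_append] at hlen
    omega
  have hsa : (s ++ [a]).Nodup :=
    List.nodup_append'.2 ⟨hs, List.nodup_singleton a,
      List.disjoint_singleton.2 fun has => ha (List.mem_append_left t has)⟩
  obtain rfl := eq_of_unsortedAfter_sandwich (x := []) (y := []) (z := [a]) hslen hst
    (by simpa using hsa) (by simpa using h)
  exact ⟨s, rfl, hsa⟩

end Sandwich

section Families

variable {α : Type*}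

/-- The words of the first family: the initial letter `a` occurs three times, every other letter
twice, and the blocks between the copies of `a` are `lk`, `kt` and `tl`. -/
def tripleWord (a : α) (l k t : List α) : List α :=
  a :: (l ++ k ++ a :: (k ++ t ++ a :: (t ++ l)))

/-- The words of the second family: the letter `c` occurs three times, twice of them in the block
before the second copy of the initial letter `a`, and every other letter occurs twice. -/
def leftDoubleWord (a : α) (l : List α) (c : α) (k t : List α) : List α :=
  a :: (l ++ c :: (k ++ c :: t) ++ a :: (l ++ c :: (t ++ k)))

/-- The words of the third family: the letter `c` occurs three times, twice of them in the block
after the second copy of the initial letter `a`, and every other letter occurs twice. -/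
def rightDoubleWord (a : α) (l : List α) (c : α) (k t : List α) : List α :=
  a :: (l ++ c :: (k ++ t) ++ a :: (l ++ c :: (t ++ c :: k)))

theorem append_cons_append_perm_swap {l k t : List α} {c : α} :
    l ++ c :: (k ++ t) ~ l ++ c :: (t ++ k) :=
  (List.perm_append_comm.cons c).append_left l

theorem isPrefix_of_nodup_of_isPrefix_square {x w : List α} (hx : x.Nodup) (h : x <+: w ++ w) :
    x <+: w := by
  obtain ⟨r, hr⟩ := h
  rcases List.append_eq_append_iff.1 hr with ⟨e, hw, -⟩ | ⟨e, rfl, hw⟩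
  · exact ⟨e, hw.symm⟩
  · obtain rfl : e = [] := List.eq_nil_iff_forall_not_mem.2 fun c hc =>
      List.disjoint_of_nodup_append hx (hw ▸ List.mem_append_left r hc) hc
    simp

theorem isSuffix_of_nodup_of_isSuffix_square {x w : List α} (hx : x.Nodup) (h : x <:+ w ++ w) :
    x <:+ w := by
  rw [← List.reverse_prefix] at h ⊢
  exact isPrefix_of_nodup_of_isPrefix_square (List.nodup_reverse.2 hx) (by simpa using h)

theorem exists_blocks_of_append_eq_square {x y z w : List α} (hx : x.Nodup) (hy : y.Nodup)
    (hz : z.Nodup) (h : x ++ y ++ z = w ++ w) :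
    ∃ e f g, x = f ++ g ∧ y = e ++ f ∧ z = g ++ e ∧ w = f ++ g ++ e := by
  obtain ⟨e, rfl⟩ : x <+: w :=
    isPrefix_of_nodup_of_isPrefix_square hx ⟨y ++ z, by rw [← h, List.append_assoc]⟩
  obtain ⟨f, hf⟩ : z <:+ x ++ e := isSuffix_of_nodup_of_isSuffix_square hz ⟨x ++ y, h⟩
  obtain rfl : y = e ++ f := by
    have h' : x ++ (y ++ z) = x ++ (e ++ f ++ z) := by
      rw [← List.append_assoc, h, List.append_assoc e, hf, List.append_assoc]
    exact List.append_cancel_right (List.append_cancel_left h')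
  rcases List.append_eq_append_iff.1 hf with ⟨g, rfl, rfl⟩ | ⟨g, rfl, rfl⟩
  · exact ⟨e, f, g, rfl, rfl, rfl, rfl⟩
  · obtain rfl : g = [] := List.eq_nil_iff_forall_not_mem.2 fun c hc =>
      List.disjoint_of_nodup_append hy (List.mem_append_left z hc) (List.mem_append_right x hc)
    exact ⟨z, x, [], by simp⟩

variable [DecidableEq α]

theorem exists_append_cons_append_cons_of_length_eq {u : List α}
    (h : u.length = u.toFinset.card + 1) :
    ∃ l c k t, u = l ++ c :: (k ++ c :: t) ∧ (l ++ c :: (k ++ t)).Nodup := by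
  induction u with
  | nil => simp at h
  | cons b u ih =>
    by_cases hb : b ∈ u
    · have hlen : u.toFinset.card = u.length := by
        rw [List.toFinset_cons, Finset.insert_eq_of_mem (List.mem_toFinset.2 hb)] at h
        simpa using h.symm
      obtain ⟨k, t, rfl⟩ := List.append_of_mem hb
      refine ⟨[], b, k, t, rfl, ?_⟩
      exact List.perm_middle.nodup_iff.1
        (Multiset.coe_nodup.1 (Multiset.toFinset_card_eq_card_iff_nodup.1 hlen))
    · have hlen : u.length = u.toFinset.card + 1 := by
        rw [List.toFinset_cons, Finset.card_insert_of_notMem (by simpa using hb)] at h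
        simpa using h
      obtain ⟨l, c, k, t, rfl, hnd⟩ := ih hlen
      have hb' : b ∉ l ++ c :: (k ++ t) := by
        simp only [List.mem_append, List.mem_cons] at hb ⊢
        tauto
      exact ⟨b :: l, c, k, t, rfl, List.nodup_cons.2 ⟨hb', hnd⟩⟩

theorem sweep_append_cons_append_cons_of_nodup {l k t : List α} {c : α}
    (h : (l ++ c :: (k ++ t)).Nodup) :
    sweep (l ++ c :: (k ++ c :: t)) = (l ++ c :: (t ++ k)).reverse := by
  obtain ⟨hl, hrest, hdisj⟩ := List.nodup_append'.1 h
  obtain ⟨hc, hkt⟩ := List.nodup_cons.1 hrest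
  have hct : (c :: t).Nodup := hrest.sublist (by simp)
  rw [sweep_append_cons_append_cons hl hdisj fun hck => hc (List.mem_append_left t hck),
    sweep_of_nodup hkt.of_append_left, sweep_of_nodup hct]
  simp

theorem exists_of_length_eq_length_sweep_add_one {u : List α} (hnd : (sweep u).Nodup)
    (h : u.length = (sweep u).length + 1) :
    ∃ l c k t, u = l ++ c :: (k ++ c :: t) ∧ sweep u = (l ++ c :: (t ++ k)).reverse := by
  have hcard : u.length = u.toFinset.card + 1 := by
    rw [h, ← toFinset_sweep, List.toFinset_card_of_nodup hnd]
  obtain ⟨l, c, k, t, rfl, hlckt⟩ := exists_append_cons_append_cons_of_length_eq hcard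
  exact ⟨l, c, k, t, rfl, sweep_append_cons_append_cons_of_nodup hlckt⟩

theorem eq_nil_of_sweep_eq_append {s x e : List α} (h : sweep s = x ++ e) (he : e ⊆ x) :
    e = [] := by
  rcases List.eq_nil_or_concat' e with rfl | ⟨e, c, rfl⟩
  · rfl
  · rcases s with _ | ⟨b, s⟩
    · simp at h
    · obtain ⟨l, hl, hb⟩ := sweep_cons_eq_concat b s
      rw [hl, ← List.append_assoc] at h
      obtain ⟨rfl, hbc⟩ := List.append_inj' h rfl
      obtain rfl : b = c := by simpa using hbc
      exact absurd (List.mem_append_left e (he (by simp))) hb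

theorem sweep_eq_and_sweep_eq_of_append_eq_square {u v w : List α}
    (h : sweep u ++ sweep v = w ++ w) : sweep u = w ∧ sweep v = w := by
  rcases List.append_eq_append_iff.1 h with ⟨e, hw, hv⟩ | ⟨e, hu, hw⟩
  · obtain rfl : e = [] := eq_nil_of_sweep_eq_append (x := e ++ sweep u)
      (by rw [hv, hw, List.append_assoc]) (by simp)
    simp_all
  · obtain rfl : e = [] := eq_nil_of_sweep_eq_append (x := w) hu (by simp [hw])
    simp_all

theorem sweep_cons_append_cons_of_notMem {a : α} {u v : List α} (hu : a ∉ u) (hv : a ∉ v) :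
    sweep (a :: (u ++ a :: v)) = sweep u ++ sweep v ++ [a] := by
  rw [sweep_cons_append_cons hu, sweep_cons_of_notMem hv, List.append_assoc]

theorem sweep_tripleWord {a : α} {l k t : List α} (h : (a :: (l ++ k ++ t)).Nodup) :
    sweep (tripleWord a l k t) = (t ++ l ++ k).reverse ++ (t ++ l ++ k).reverse ++ [a] := by
  obtain ⟨ha, hnd⟩ := List.nodup_cons.1 h
  simp only [List.mem_append, not_or] at ha
  obtain ⟨⟨hal, hak⟩, hat⟩ := ha
  have hlk : (l ++ k).Nodup := hnd.of_append_left
  have hkt : (k ++ t).Nodup := hnd.sublist (by simp)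
  have htl : (t ++ l).Nodup := List.nodup_append_comm.1 (hnd.sublist (by simp))
  rw [tripleWord, sweep_cons_append_cons (by simp [hal, hak]),
    sweep_cons_append_cons_of_notMem (by simp [hak, hat]) (by simp [hat, hal]),
    sweep_of_nodup hlk, sweep_of_nodup hkt, sweep_of_nodup htl]
  simp

theorem sweep_leftDoubleWord {a c : α} {l k t : List α} (h : (a :: (l ++ c :: (k ++ t))).Nodup) :
    sweep (leftDoubleWord a l c k t) =
      (l ++ c :: (t ++ k)).reverse ++ (l ++ c :: (t ++ k)).reverse ++ [a] := by
  obtain ⟨ha, hnd⟩ := List.nodup_cons.1 h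
  have ha' : a ∉ l ++ c :: (k ++ c :: t) := by
    simp only [List.mem_append, List.mem_cons] at ha ⊢
    tauto
  have ha'' : a ∉ l ++ c :: (t ++ k) := append_cons_append_perm_swap.mem_iff.not.1 ha
  rw [leftDoubleWord, sweep_cons_append_cons_of_notMem ha' ha'',
    sweep_append_cons_append_cons_of_nodup hnd,
    sweep_of_nodup (append_cons_append_perm_swap.nodup hnd)]

theorem sweep_rightDoubleWord {a c : α} {l k t : List α}
    (h : (a :: (l ++ c :: (k ++ t))).Nodup) :
    sweep (rightDoubleWord a l c k t) =
      (l ++ c :: (k ++ t)).reverse ++ (l ++ c :: (k ++ t)).reverse ++ [a] := by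
  obtain ⟨ha, hnd⟩ := List.nodup_cons.1 h
  have ha' : a ∉ l ++ c :: (t ++ c :: k) := by
    simp only [List.mem_append, List.mem_cons] at ha ⊢
    tauto
  rw [rightDoubleWord, sweep_cons_append_cons_of_notMem ha ha',
    sweep_of_nodup hnd,
    sweep_append_cons_append_cons_of_nodup (append_cons_append_perm_swap.nodup hnd)]

theorem exists_eq_tripleWord_of_sweep_eq {a : α} {u v w z : List α}
    (hu : a ∉ u) (hv : a ∉ v) (hw : (w ++ [a]).Nodup)
    (hlen : u.length + v.length + z.length = 2 * w.length)
    (h : sweep (a :: (u ++ a :: (v ++ a :: z))) = w ++ w ++ [a]) :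
    ∃ l k t, a :: (u ++ a :: (v ++ a :: z)) = tripleWord a l k t ∧ (a :: (l ++ k ++ t)).Nodup := by
  rw [sweep_cons_append_cons hu, sweep_cons_append_cons hv, ← List.append_assoc] at h
  have hu_le := length_sweep_le u
  have hv_le := length_sweep_le v
  have hz_le := length_sweep_le (a :: z)
  have hlen' := congrArg List.length h
  simp only [List.length_append, List.length_cons, List.length_nil] at hz_le hlen'
  have hu_nodup : u.Nodup := nodup_of_length_le_length_sweep (by omega)
  have hv_nodup : v.Nodup := nodup_of_length_le_length_sweep (by omega)
  have hz_nodup : (a :: z).Nodup :=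
    nodup_of_length_le_length_sweep (by simp only [List.length_cons]; omega)
  rw [sweep_of_nodup hu_nodup, sweep_of_nodup hv_nodup, sweep_of_nodup hz_nodup,
    List.reverse_cons, ← List.append_assoc, List.append_left_inj] at h
  obtain ⟨e, f, g, hue, hve, hze, rfl⟩ := exists_blocks_of_append_eq_square
    (List.nodup_reverse.2 hu_nodup) (List.nodup_reverse.2 hv_nodup)
    (List.nodup_reverse.2 hz_nodup.of_cons) h
  rw [List.reverse_eq_iff, List.reverse_append] at hue hve hze
  refine ⟨g.reverse, f.reverse, e.reverse, by rw [hue, hve, hze, tripleWord], ?_⟩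
  have hnd := List.nodup_reverse.2 hw
  have hperm : e.reverse ++ (g.reverse ++ f.reverse) ~ g.reverse ++ f.reverse ++ e.reverse :=
    List.perm_append_comm
  exact (hperm.cons a).nodup (by simpa using hnd)

theorem exists_eq_doubleWord_of_sweep_eq {a : α} {u v w : List α}
    (hu : a ∉ u) (hv : a ∉ v) (hw : (w ++ [a]).Nodup)
    (hlen : u.length + v.length = 2 * w.length + 1)
    (h : sweep (a :: (u ++ a :: v)) = w ++ w ++ [a]) :
    ∃ l c k t, (a :: (u ++ a :: v) = leftDoubleWord a l c k t ∨
      a :: (u ++ a :: v) = rightDoubleWord a l c k t) ∧ (a :: (l ++ c :: (k ++ t))).Nodup := by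
  rw [sweep_cons_append_cons_of_notMem hu hv, List.append_left_inj] at h
  obtain ⟨rfl, hvu⟩ := sweep_eq_and_sweep_eq_of_append_eq_square h
  have hnd : (sweep u).Nodup := hw.of_append_left
  have hau : (a :: (sweep u).reverse).Nodup := by simpa using List.nodup_reverse.2 hw
  have hu_le := length_sweep_le u
  have hv_le := length_sweep_le v
  rw [hvu] at hv_le
  rcases lt_or_ge (sweep u).length u.length with hlt | hge
  · obtain ⟨l, c, k, t, rfl, hsweep⟩ := exists_of_length_eq_length_sweep_add_one hnd (by omega)
    have hv_nodup : v.Nodup := nodup_of_length_le_length_sweep (by rw [hvu]; omega)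
    rw [hsweep, List.reverse_reverse] at hau
    rw [sweep_of_nodup hv_nodup, hsweep, List.reverse_inj] at hvu
    refine ⟨l, c, k, t, .inl (by rw [hvu, leftDoubleWord]), ?_⟩
    exact (append_cons_append_perm_swap.cons a).nodup hau
  · have hu_nodup : u.Nodup := nodup_of_length_le_length_sweep hge
    rw [← hvu] at hnd
    obtain ⟨l, c, t, k, rfl, hsweep⟩ :=
      exists_of_length_eq_length_sweep_add_one hnd (by rw [hvu]; omega)
    rw [hsweep, sweep_of_nodup hu_nodup, List.reverse_inj] at hvu
    subst hvu
    refine ⟨l, c, k, t, .inr rfl, ?_⟩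
    simpa [sweep_of_nodup hu_nodup] using hau

end Families

section Classification

theorem length_sweep_add_one_lt_length {α : Type*} [DecidableEq α] {a : α} {u v : List α}
    (hu : a ∉ u) (h : 2 * (a :: (u ++ a :: v)).toFinset.card < (a :: (u ++ a :: v)).length) :
    (sweep (a :: (u ++ a :: v))).length + 1 < (a :: (u ++ a :: v)).length := by
  have hlen : (a :: (u ++ a :: v)).length = (a :: u).length + (a :: v).length := by simp; omega
  have hu_le := length_sweep_le u
  have hv_le := length_sweep_le (a :: v)
  rw [hlen] at h ⊢
  rw [sweep_cons_append_cons hu, List.length_append]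
  by_contra! hge
  rw [List.length_cons (a := a) (as := u)] at hge
  have hau : (a :: u).Nodup := (nodup_of_length_le_length_sweep (by omega)).cons hu
  have hav : (a :: v).Nodup := nodup_of_length_le_length_sweep (by omega)
  have hau_le : (a :: u).length ≤ (a :: (u ++ a :: v)).toFinset.card := by
    rw [← List.toFinset_card_of_nodup hau]
    exact Finset.card_le_card fun c hc => List.mem_toFinset.2
      (List.mem_append_left (a :: v) (List.mem_toFinset.1 hc))
  have hav_le : (a :: v).length ≤ (a :: (u ++ a :: v)).toFinset.card := by
    rw [← List.toFinset_card_of_nodup hav]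
    exact Finset.card_le_card fun c hc => List.mem_toFinset.2
      (List.mem_append_right (a :: u) (List.mem_toFinset.1 hc))
  omega

theorem exists_sweep_eq_square_concat_of_unsortedAfter {m : ℕ} {p : List ℕ}
    (hlen : p.length = 2 * (m + 3) + 1) (hcard : p.toFinset.card = m + 3)
    (h : UnsortedAfter (m + 2) p) :
    ∃ a u v w, p = a :: (u ++ a :: v) ∧ a ∉ u ∧ sweep p = w ++ w ++ [a] ∧ (w ++ [a]).Nodup := by
  have hrep : repeated p = p.toFinset := by
    refine Finset.eq_of_subset_of_card_le (Finset.filter_subset _ _) ?_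
    rw [hcard]
    exact lt_card_repeated_of_unsortedAfter h
  have hlong := card_toFinset_add_lt_length_sweep_of_unsortedAfter h
  obtain ⟨a, s, rfl⟩ := List.exists_cons_of_length_eq_add_one hlen
  obtain ⟨u, v, rfl, hu⟩ := exists_append_cons_of_mem_repeated (hrep.symm.subset (by simp))
  have hlt := length_sweep_add_one_lt_length (v := v) hu (by omega)
  obtain ⟨l, hl, ha⟩ := sweep_cons_eq_concat a (u ++ a :: v)
  rw [hl, List.length_append, List.length_singleton] at hlt
  rw [hl, List.length_append, List.length_singleton, hcard] at hlong
  have hlcard : l.toFinset.card = m + 2 := by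
    have hcard' := hcard
    rw [← toFinset_sweep, hl, List.toFinset_eq_of_perm _ _ (List.perm_append_singleton a l),
      List.toFinset_cons, Finset.card_insert_of_notMem (by simpa using ha)] at hcard'
    omega
  rw [unsortedAfter_succ, hl] at h
  obtain ⟨w, rfl, hw⟩ := eq_square_of_unsortedAfter_concat ha (by omega) hlcard h
  exact ⟨a, u, v, w, rfl, hu, hl, hw⟩

theorem card_toFinset_of_sweep_eq_square_concat {α : Type*} [DecidableEq α] {a : α} {p w : List α}
    (h : sweep p = w ++ w ++ [a]) (hw : (w ++ [a]).Nodup) : p.toFinset.card = w.length + 1 := by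
  have hletters : p.toFinset = (w ++ [a]).toFinset := by
    rw [← toFinset_sweep, h]
    ext c
    simp
  rw [hletters, List.toFinset_card_of_nodup hw, List.length_append, List.length_singleton]

theorem unsortedAfter_of_sweep_eq_reverse_square_concat {m a : ℕ} {p s : List ℕ}
    (hcard : p.toFinset.card = m + 3) (h : sweep p = s.reverse ++ s.reverse ++ [a])
    (hs : (a :: s).Nodup) : UnsortedAfter (m + 2) p := by
  have hw : (s.reverse ++ [a]).Nodup := by rwa [← List.reverse_cons, List.nodup_reverse]
  have hlen := card_toFinset_of_sweep_eq_square_concat h hw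
  rw [unsortedAfter_succ, h]
  exact unsortedAfter_square_concat (by omega) hw

theorem unsortedAfter_iff_exists_eq {m : ℕ} {p : List ℕ} (hlen : p.length = 2 * (m + 3) + 1)
    (hcard : p.toFinset.card = m + 3) :
    UnsortedAfter (m + 2) p ↔
      (∃ a l k t, p = tripleWord a l k t ∧ (a :: (l ++ k ++ t)).Nodup) ∨
      ∃ a l c k t, (p = leftDoubleWord a l c k t ∨ p = rightDoubleWord a l c k t) ∧
        (a :: (l ++ c :: (k ++ t))).Nodup := by
  constructor
  · intro h
    obtain ⟨a, u, v, w, rfl, hu, hsweep, hw⟩ :=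
      exists_sweep_eq_square_concat_of_unsortedAfter hlen hcard h
    have hwlen : w.length = m + 2 := by
      have hw_len := card_toFinset_of_sweep_eq_square_concat hsweep hw
      omega
    simp only [List.length_cons, List.length_append] at hlen
    by_cases hv : a ∈ v
    · obtain ⟨v, z, rfl, hav⟩ := List.eq_append_cons_of_mem hv
      simp only [List.length_cons, List.length_append] at hlen
      exact .inl ⟨a, exists_eq_tripleWord_of_sweep_eq hu hav hw (by omega) hsweep⟩
    · exact .inr ⟨a, exists_eq_doubleWord_of_sweep_eq hu hv hw (by omega) hsweep⟩
  · rintro (⟨a, l, k, t, rfl, hnd⟩ | ⟨a, l, c, k, t, rfl | rfl, hnd⟩)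
    · refine unsortedAfter_of_sweep_eq_reverse_square_concat hcard (sweep_tripleWord hnd) ?_
      have hperm : l ++ k ++ t ~ t ++ l ++ k := by
        simpa using List.perm_append_comm (l₁ := l ++ k) (l₂ := t)
      exact (hperm.cons a).nodup hnd
    · refine unsortedAfter_of_sweep_eq_reverse_square_concat hcard (sweep_leftDoubleWord hnd) ?_
      exact (append_cons_append_perm_swap.cons a).nodup hnd
    · exact unsortedAfter_of_sweep_eq_reverse_square_concat hcard (sweep_rightDoubleWord hnd) hnd

end Classification

section Canonical

theorem removeAll_eq_nil_of_subset {α : Type*} [BEq α] [LawfulBEq α] {u v : List α} (h : v ⊆ u) :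
    v.removeAll u = [] := by
  simp only [List.removeAll, List.filter_eq_nil_iff]
  intro x hx
  simpa using h hx

theorem removeAll_eq_self_of_disjoint {α : Type*} [BEq α] [LawfulBEq α] {u v : List α}
    (h : u.Disjoint v) : v.removeAll u = v := by
  simp only [List.removeAll, List.filter_eq_self]
  intro x hx
  simpa using fun hxu => h hxu hx

theorem eraseDups_append_of_subset {α : Type*} [BEq α] [LawfulBEq α] {u v : List α} (h : v ⊆ u) :
    (u ++ v).eraseDups = u.eraseDups := by
  rw [List.eraseDups_append, removeAll_eq_nil_of_subset h, List.eraseDups_nil, List.append_nil]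

theorem eraseDups_append_of_disjoint {α : Type*} [BEq α] [LawfulBEq α] {u v : List α}
    (h : u.Disjoint v) : (u ++ v).eraseDups = u.eraseDups ++ v.eraseDups := by
  rw [List.eraseDups_append, removeAll_eq_self_of_disjoint h]

theorem eraseDups_eq_self_of_nodup {α : Type*} [BEq α] [LawfulBEq α] {u : List α} (h : u.Nodup) :
    u.eraseDups = u := by
  induction h with
  | nil => rfl
  | cons hne _ ih =>
    rw [List.eraseDups_cons, List.filter_eq_self.2, ih]
    exact fun b hb => by simpa using (hne b hb).symm

theorem canonicalWord_concat {p : List ℕ} {x : ℕ} :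
    CanonicalWord (p ++ [x]) ↔ CanonicalWord p ∧ x ≤ p.toFinset.card := by
  simp only [CanonicalWord, Fin.forall_iff, List.get_eq_getElem, List.length_append,
    List.length_singleton, Nat.lt_succ_iff_lt_or_eq]
  constructor
  · intro h
    refine ⟨fun i hi => ?_, by simpa using h p.length (.inr rfl)⟩
    simpa [List.getElem_append_left hi, List.take_append_of_le_length hi.le] using h i (.inl hi)
  · rintro ⟨hp, hx⟩ i (hi | rfl)
    · simpa [List.getElem_append_left hi, List.take_append_of_le_length hi.le] using hp i hi
    · simpa using hx

theorem canonicalWord_iff_eraseDups {p : List ℕ} :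
    CanonicalWord p ↔ p.eraseDups = List.range p.toFinset.card := by
  induction p using List.reverseRecOn with
  | nil => simp [CanonicalWord]
  | append_singleton p x ih =>
    rw [canonicalWord_concat, ih,
      List.toFinset_eq_of_perm _ _ (List.perm_append_singleton x p), List.toFinset_cons]
    by_cases hx : x ∈ p
    · rw [eraseDups_append_of_subset (by simpa using hx),
        Finset.insert_eq_of_mem (List.mem_toFinset.2 hx), and_iff_left_iff_imp]
      intro h
      rw [← List.mem_eraseDups, h, List.mem_range] at hx
      exact hx.le
    · have hdisj : p.Disjoint [x] := List.disjoint_singleton.2 hx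
      rw [eraseDups_append_of_disjoint hdisj, eraseDups_eq_self_of_nodup (List.nodup_singleton x),
        Finset.card_insert_of_notMem (by simpa using hx), List.range_succ,
        List.append_singleton_inj, and_congr_right_iff]
      intro h
      rw [← List.mem_eraseDups, h, List.mem_range, not_lt] at hx
      exact ⟨fun hle => hle.antisymm hx, Eq.le⟩

theorem canonicalWord_and_nletters_eq_iff {p : List ℕ} {n : ℕ} :
    CanonicalWord p ∧ Nletters p = n ↔ p.eraseDups = List.range n := by
  rw [canonicalWord_iff_eraseDups, Nletters]
  refine ⟨fun ⟨h, hn⟩ => hn ▸ h, fun h => ?_⟩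
  have hletters : p.toFinset = Finset.range n := by
    ext x
    rw [List.mem_toFinset, ← List.mem_eraseDups, h, List.mem_range, Finset.mem_range]
  rw [hletters, Finset.card_range]
  exact ⟨h, rfl⟩

variable {α : Type*} [BEq α] [LawfulBEq α]

theorem eraseDups_tripleWord {a : α} {l k t : List α} (h : (a :: (l ++ k ++ t)).Nodup) :
    (tripleWord a l k t).eraseDups = a :: (l ++ k ++ t) := by
  have hword : tripleWord a l k t = a :: (l ++ k) ++ a :: k ++ t ++ a :: (t ++ l) := by
    simp [tripleWord]
  obtain ⟨hlk, ht, hdisj⟩ := List.nodup_append'.1 (List.cons_append ▸ h)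
  have hsub : a :: k ⊆ a :: (l ++ k) := by simp
  have hdisj' : (a :: (l ++ k) ++ a :: k).Disjoint t :=
    List.disjoint_of_subset_left (List.append_subset.2 ⟨fun _ => id, hsub⟩) hdisj
  have hsub' : a :: (t ++ l) ⊆ a :: (l ++ k) ++ a :: k ++ t := fun x => by
    simp only [List.mem_append, List.mem_cons]
    tauto
  rw [hword, eraseDups_append_of_subset hsub', eraseDups_append_of_disjoint hdisj',
    eraseDups_append_of_subset hsub, eraseDups_eq_self_of_nodup hlk,
    eraseDups_eq_self_of_nodup ht, List.cons_append]

theorem eraseDups_leftDoubleWord {a c : α} {l k t : List α}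
    (h : (a :: (l ++ c :: (k ++ t))).Nodup) :
    (leftDoubleWord a l c k t).eraseDups = a :: (l ++ c :: (k ++ t)) := by
  have hword : leftDoubleWord a l c k t =
      a :: (l ++ c :: k) ++ [c] ++ t ++ a :: (l ++ c :: (t ++ k)) := by simp [leftDoubleWord]
  have hnd : (a :: (l ++ c :: k) ++ t).Nodup := by simpa using h
  obtain ⟨hlk, ht, hdisj⟩ := List.nodup_append'.1 hnd
  have hsub : [c] ⊆ a :: (l ++ c :: k) := by simp
  have hdisj' : (a :: (l ++ c :: k) ++ [c]).Disjoint t :=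
    List.disjoint_of_subset_left (List.append_subset.2 ⟨fun _ => id, hsub⟩) hdisj
  have hsub' : a :: (l ++ c :: (t ++ k)) ⊆ a :: (l ++ c :: k) ++ [c] ++ t := fun x => by
    simp only [List.mem_append, List.mem_cons]
    tauto
  rw [hword, eraseDups_append_of_subset hsub', eraseDups_append_of_disjoint hdisj',
    eraseDups_append_of_subset hsub, eraseDups_eq_self_of_nodup hlk,
    eraseDups_eq_self_of_nodup ht]
  simp

theorem eraseDups_rightDoubleWord {a c : α} {l k t : List α}
    (h : (a :: (l ++ c :: (k ++ t))).Nodup) :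
    (rightDoubleWord a l c k t).eraseDups = a :: (l ++ c :: (k ++ t)) := by
  have hword : rightDoubleWord a l c k t =
      a :: (l ++ c :: (k ++ t)) ++ a :: (l ++ c :: (t ++ c :: k)) := rfl
  have hsub : a :: (l ++ c :: (t ++ c :: k)) ⊆ a :: (l ++ c :: (k ++ t)) := fun x => by
    simp only [List.mem_append, List.mem_cons]
    tauto
  rw [hword, eraseDups_append_of_subset hsub, eraseDups_eq_self_of_nodup h]

end Canonical

section Splits

variable {α β : Type*} [DecidableEq α] [DecidableEq β]

/-- The pairs `(l, q)` where `l` is a prefix of the word and `q ∈ f r` for the remaining suffix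
`r`. Iterating this operation enumerates the factorizations of a word. -/
def prefixWith (f : List α → Finset β) : List α → Finset (List α × β)
  | [] => {[]} ×ˢ f []
  | x :: w => ({[]} ×ˢ f (x :: w)) ∪ (prefixWith f w).image (Prod.map (x :: ·) id)

theorem mem_prefixWith {f : List α → Finset β} {w l : List α} {q : β} :
    (l, q) ∈ prefixWith f w ↔ ∃ r, l ++ r = w ∧ q ∈ f r := by
  induction w generalizing l with
  | nil => simp [prefixWith, and_assoc, and_comm]
  | cons x w ih => rcases l with _ | ⟨y, l⟩ <;> simp [prefixWith, ih, eq_comm, and_assoc, and_comm]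

theorem card_prefixWith {f : List α → Finset β} {g : ℕ → ℕ} (hf : ∀ r, (f r).card = g r.length)
    (w : List α) : (prefixWith f w).card = ∑ i ∈ Finset.range (w.length + 1), g i := by
  induction w with
  | nil => simp [prefixWith, hf]
  | cons x w ih =>
    have hinj : Function.Injective (Prod.map (x :: ·) (id : β → β)) :=
      List.cons_injective.prodMap Function.injective_id
    have hdisj : Disjoint ({[]} ×ˢ f (x :: w))
        ((prefixWith f w).image (Prod.map (x :: ·) (id : β → β))) := by
      simp [Finset.disjoint_left]
    rw [prefixWith, Finset.card_union_of_disjoint hdisj, Finset.card_image_of_injective _ hinj, ih,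
      Finset.card_product, Finset.card_singleton, one_mul, hf, List.length_cons,
      Finset.sum_range_succ _ (w.length + 1), add_comm]

/-- The factorizations `w = l ++ r`. -/
def splits : List α → Finset (List α × List α) := prefixWith fun r => {r}

theorem mem_splits {w l r : List α} : (l, r) ∈ splits w ↔ l ++ r = w := by
  simp [splits, mem_prefixWith]

theorem card_splits (w : List α) : (splits w).card = w.length + 1 := by
  rw [splits, card_prefixWith (g := fun _ => 1) fun r => Finset.card_singleton r]
  simp

theorem sum_range_succ_id (n : ℕ) : ∑ i ∈ Finset.range (n + 1), i = (n + 1).choose 2 := by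
  rw [Finset.sum_range_id, Nat.choose_two_right]

/-- The factorizations `w = l ++ k ++ t`. -/
def threeSplits : List α → Finset (List α × List α × List α) := prefixWith splits

theorem mem_threeSplits {w l k t : List α} : (l, k, t) ∈ threeSplits w ↔ l ++ k ++ t = w := by
  simp [threeSplits, mem_prefixWith, mem_splits]

theorem card_threeSplits (w : List α) : (threeSplits w).card = (w.length + 2).choose 2 := by
  have hsum := Finset.sum_range_succ' (fun i => i) (w.length + 1)
  rw [add_zero, sum_range_succ_id] at hsum
  rw [threeSplits, card_prefixWith card_splits, ← hsum]

/-- The factorizations `w = l ++ c :: (k ++ t)`, in which a letter `c` is singled out. -/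
def markedSplits : List α → Finset (List α × α × List α × List α) :=
  prefixWith fun
    | [] => ∅
    | c :: r => {c} ×ˢ splits r

theorem mem_markedSplits {w l k t : List α} {c : α} :
    (l, c, k, t) ∈ markedSplits w ↔ l ++ c :: (k ++ t) = w := by
  rw [markedSplits, mem_prefixWith]
  constructor
  · rintro ⟨_ | ⟨b, r⟩, h, hq⟩ <;> simp_all [mem_splits]
  · rintro rfl
    exact ⟨_, rfl, by simp [mem_splits]⟩

theorem card_markedSplits (w : List α) : (markedSplits w).card = (w.length + 1).choose 2 := by
  rw [markedSplits, card_prefixWith (g := id)]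
  · exact sum_range_succ_id w.length
  · rintro (_ | ⟨c, r⟩)
    · rfl
    · simp [card_splits]

end Splits

section Counting

section Injectivity

variable {α : Type*} {a c c' : α} {l k t l' k' t' : List α}

theorem append_cons_eq_append_cons_iff {x x' y y' : List α} (hx : a ∉ x) (hx' : a ∉ x') :
    x ++ a :: y = x' ++ a :: y' ↔ x = x' ∧ y = y' := by
  induction x generalizing x' with
  | nil => cases x' <;> simp_all
  | cons b x ih => cases x' <;> simp_all [and_assoc, eq_comm]

theorem notMem_of_nodup_append_cons (h : (l ++ c :: k).Nodup) : c ∉ l ∧ c ∉ k := by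
  have hck := (List.nodup_cons.1 (List.perm_middle.nodup_iff.1 h)).1
  simpa using hck

theorem append_cons_append_cons_perm : l ++ c :: (k ++ c :: t) ~ c :: (l ++ c :: (k ++ t)) :=
  ((List.perm_middle.cons c).append_left l).trans List.perm_middle

theorem mem_append_cons_append_cons_iff {b : α} :
    b ∈ l ++ c :: (k ++ c :: t) ↔ b ∈ l ++ c :: (k ++ t) := by
  rw [append_cons_append_cons_perm.mem_iff, List.mem_cons, or_iff_right_iff_imp]
  rintro rfl
  simp

theorem eq_of_append_cons_append_cons_eq (h : (l ++ c :: (k ++ t)).Nodup)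
    (h' : (l' ++ c' :: (k' ++ t')).Nodup)
    (e : l ++ c :: (k ++ c :: t) = l' ++ c' :: (k' ++ c' :: t')) :
    l = l' ∧ c = c' ∧ k = k' ∧ t = t' := by
  obtain rfl : c = c' := by
    have hperm : c :: (l ++ c :: (k ++ t)) ~ c' :: (l' ++ c' :: (k' ++ t')) :=
      (append_cons_append_cons_perm.symm.trans (.of_eq e)).trans append_cons_append_cons_perm
    classical
    by_contra hne
    have hcount := hperm.count_eq c
    rw [List.count_cons_self, List.count_cons_of_ne (Ne.symm hne),
      List.count_eq_one_of_mem h (by simp)] at hcount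
    have hle := List.nodup_iff_count_le_one.1 h' c
    omega
  obtain ⟨hl, hkt⟩ := notMem_of_nodup_append_cons h
  obtain ⟨hl', hkt'⟩ := notMem_of_nodup_append_cons h'
  obtain ⟨hll', hrest⟩ := (append_cons_eq_append_cons_iff hl hl').1 e
  exact ⟨hll', rfl, (append_cons_eq_append_cons_iff (fun hk => hkt (List.mem_append_left t hk))
    fun hk => hkt' (List.mem_append_left t' hk)).1 hrest⟩

theorem eq_of_tripleWord_eq (h : a ∉ l ++ k ++ t) (h' : a ∉ l' ++ k' ++ t')
    (e : tripleWord a l k t = tripleWord a l' k' t') : l = l' ∧ k = k' ∧ t = t' := by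
  simp only [List.mem_append, not_or] at h h'
  obtain ⟨hlk, e⟩ := (append_cons_eq_append_cons_iff (by simp [h]) (by simp [h'])).1
    (List.tail_eq_of_cons_eq e)
  obtain ⟨hkt, htl⟩ := (append_cons_eq_append_cons_iff (by simp [h]) (by simp [h'])).1 e
  have hlen : l.length = l'.length := by
    have hlk_len := congrArg List.length hlk
    have hkt_len := congrArg List.length hkt
    have htl_len := congrArg List.length htl
    simp only [List.length_append] at hlk_len hkt_len htl_len
    omega
  obtain ⟨rfl, rfl⟩ := List.append_inj hlk hlen
  exact ⟨rfl, rfl, List.append_cancel_left hkt⟩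

theorem eq_of_leftDoubleWord_eq (h : (a :: (l ++ c :: (k ++ t))).Nodup)
    (h' : (a :: (l' ++ c' :: (k' ++ t'))).Nodup)
    (e : leftDoubleWord a l c k t = leftDoubleWord a l' c' k' t') :
    l = l' ∧ c = c' ∧ k = k' ∧ t = t' := by
  rw [List.nodup_cons, ← mem_append_cons_append_cons_iff] at h h'
  exact eq_of_append_cons_append_cons_eq h.2 h'.2
    ((append_cons_eq_append_cons_iff h.1 h'.1).1 (List.tail_eq_of_cons_eq e)).1

theorem eq_of_rightDoubleWord_eq (h : (a :: (l ++ c :: (k ++ t))).Nodup)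
    (h' : (a :: (l' ++ c' :: (k' ++ t'))).Nodup)
    (e : rightDoubleWord a l c k t = rightDoubleWord a l' c' k' t') :
    l = l' ∧ c = c' ∧ k = k' ∧ t = t' := by
  rw [List.nodup_cons] at h h'
  obtain ⟨hl, hc, ht, hk⟩ := eq_of_append_cons_append_cons_eq
    (append_cons_append_perm_swap.nodup h.2) (append_cons_append_perm_swap.nodup h'.2)
    ((append_cons_eq_append_cons_iff h.1 h'.1).1 (List.tail_eq_of_cons_eq e)).2
  exact ⟨hl, hc, hk, ht⟩

theorem leftDoubleWord_ne_rightDoubleWord (h : a ∉ l ++ c :: (k ++ t))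
    (h' : (a :: (l' ++ c' :: (k' ++ t'))).Nodup) :
    leftDoubleWord a l c k t ≠ rightDoubleWord a l' c' k' t' := by
  intro e
  rw [List.nodup_cons] at h'
  rw [← mem_append_cons_append_cons_iff] at h
  have hu := ((append_cons_eq_append_cons_iff h h'.1).1 (List.tail_eq_of_cons_eq e)).1
  have hnd := hu ▸ h'.2
  exact (notMem_of_nodup_append_cons hnd).2 (by simp)

end Injectivity

variable {α : Type*} [DecidableEq α]

theorem count_tripleWord {a : α} {l k t : List α} (h : a ∉ l ++ k ++ t) :
    (tripleWord a l k t).count a = 3 := by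
  simp only [List.mem_append, not_or] at h
  simp [tripleWord, List.count_eq_zero.2 h.1.1, List.count_eq_zero.2 h.1.2,
    List.count_eq_zero.2 h.2]

theorem count_leftDoubleWord {a c : α} {l k t : List α} (h : a ∉ l ++ c :: (k ++ t)) :
    (leftDoubleWord a l c k t).count a = 2 := by
  simp only [List.mem_append, List.mem_cons, not_or] at h
  simp [leftDoubleWord, List.count_eq_zero.2 h.1, List.count_cons_of_ne (Ne.symm h.2.1),
    List.count_eq_zero.2 h.2.2.1, List.count_eq_zero.2 h.2.2.2]

theorem count_rightDoubleWord {a c : α} {l k t : List α} (h : a ∉ l ++ c :: (k ++ t)) :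
    (rightDoubleWord a l c k t).count a = 2 := by
  simp only [List.mem_append, List.mem_cons, not_or] at h
  simp [rightDoubleWord, List.count_eq_zero.2 h.1, List.count_cons_of_ne (Ne.symm h.2.1),
    List.count_eq_zero.2 h.2.2.1, List.count_eq_zero.2 h.2.2.2]

/-- The words of the first family with initial letter `a` whose remaining letters first occur in
the order `w`. -/
def tripleWords (a : α) (w : List α) : Finset (List α) :=
  (threeSplits w).image fun (l, k, t) => tripleWord a l k t

/-- The words of the second family with initial letter `a` whose remaining letters first occur in
the order `w`. -/
def leftDoubleWords (a : α) (w : List α) : Finset (List α) :=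
  (markedSplits w).image fun (l, c, k, t) => leftDoubleWord a l c k t

/-- The words of the third family with initial letter `a` whose remaining letters first occur in
the order `w`. -/
def rightDoubleWords (a : α) (w : List α) : Finset (List α) :=
  (markedSplits w).image fun (l, c, k, t) => rightDoubleWord a l c k t

variable {a : α} {w p : List α}

theorem mem_tripleWords :
    p ∈ tripleWords a w ↔ ∃ l k t, l ++ k ++ t = w ∧ tripleWord a l k t = p := by
  simp only [tripleWords, Finset.mem_image, Prod.exists, mem_threeSplits]

theorem mem_leftDoubleWords :
    p ∈ leftDoubleWords a w ↔ ∃ l c k t, l ++ c :: (k ++ t) = w ∧ leftDoubleWord a l c k t = p := by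
  simp only [leftDoubleWords, Finset.mem_image, Prod.exists, mem_markedSplits]

theorem mem_rightDoubleWords :
    p ∈ rightDoubleWords a w ↔
      ∃ l c k t, l ++ c :: (k ++ t) = w ∧ rightDoubleWord a l c k t = p := by
  simp only [rightDoubleWords, Finset.mem_image, Prod.exists, mem_markedSplits]

theorem card_tripleWords (h : a ∉ w) : (tripleWords a w).card = (w.length + 2).choose 2 := by
  rw [tripleWords, Finset.card_image_of_injOn, card_threeSplits]
  rintro ⟨l, k, t⟩ hs ⟨l', k', t'⟩ hs' e
  rw [Finset.mem_coe, mem_threeSplits] at hs hs'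
  obtain ⟨rfl, rfl, rfl⟩ := eq_of_tripleWord_eq (hs ▸ h) (hs' ▸ h) e
  rfl

theorem card_leftDoubleWords (h : (a :: w).Nodup) :
    (leftDoubleWords a w).card = (w.length + 1).choose 2 := by
  rw [leftDoubleWords, Finset.card_image_of_injOn, card_markedSplits]
  rintro ⟨l, c, k, t⟩ hs ⟨l', c', k', t'⟩ hs' e
  rw [Finset.mem_coe, mem_markedSplits] at hs hs'
  obtain ⟨rfl, rfl, rfl, rfl⟩ := eq_of_leftDoubleWord_eq (hs ▸ h) (hs' ▸ h) e
  rfl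

theorem card_rightDoubleWords (h : (a :: w).Nodup) :
    (rightDoubleWords a w).card = (w.length + 1).choose 2 := by
  rw [rightDoubleWords, Finset.card_image_of_injOn, card_markedSplits]
  rintro ⟨l, c, k, t⟩ hs ⟨l', c', k', t'⟩ hs' e
  rw [Finset.mem_coe, mem_markedSplits] at hs hs'
  obtain ⟨rfl, rfl, rfl, rfl⟩ := eq_of_rightDoubleWord_eq (hs ▸ h) (hs' ▸ h) e
  rfl

theorem disjoint_leftDoubleWords_rightDoubleWords (h : (a :: w).Nodup) :
    Disjoint (leftDoubleWords a w) (rightDoubleWords a w) := by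
  simp only [Finset.disjoint_left, mem_leftDoubleWords, mem_rightDoubleWords]
  rintro p ⟨l, c, k, t, rfl, rfl⟩ ⟨l', c', k', t', e, hp⟩
  exact leftDoubleWord_ne_rightDoubleWord (List.nodup_cons.1 h).1 (e ▸ h) hp.symm

theorem disjoint_tripleWords_union (h : a ∉ w) :
    Disjoint (tripleWords a w) (leftDoubleWords a w ∪ rightDoubleWords a w) := by
  simp only [Finset.disjoint_left, Finset.mem_union, mem_tripleWords, mem_leftDoubleWords,
    mem_rightDoubleWords]
  rintro p ⟨l, k, t, rfl, rfl⟩ (⟨l', c, k', t', e, hp⟩ | ⟨l', c, k', t', e, hp⟩)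
  · have hcount := count_leftDoubleWord (e ▸ h)
    rw [hp, count_tripleWord h] at hcount
    omega
  · have hcount := count_rightDoubleWord (e ▸ h)
    rw [hp, count_tripleWord h] at hcount
    omega

/-- The words with initial letter `a` in one of the three families, whose remaining letters first
occur in the order `w`. -/
def extremalWords (a : α) (w : List α) : Finset (List α) :=
  tripleWords a w ∪ (leftDoubleWords a w ∪ rightDoubleWords a w)

theorem card_extremalWords (h : (a :: w).Nodup) :
    (extremalWords a w).card = (w.length + 2).choose 2 + 2 * (w.length + 1).choose 2 := by
  have ha : a ∉ w := (List.nodup_cons.1 h).1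
  rw [extremalWords, Finset.card_union_of_disjoint (disjoint_tripleWords_union ha),
    Finset.card_union_of_disjoint (disjoint_leftDoubleWords_rightDoubleWords h),
    card_tripleWords ha, card_leftDoubleWords h, card_rightDoubleWords h, two_mul]

theorem mem_extremalWords :
    p ∈ extremalWords a w ↔
      (∃ l k t, p = tripleWord a l k t ∧ l ++ k ++ t = w) ∨
      ∃ l c k t, (p = leftDoubleWord a l c k t ∨ p = rightDoubleWord a l c k t) ∧
        l ++ c :: (k ++ t) = w := by
  simp only [extremalWords, Finset.mem_union, mem_tripleWords, mem_leftDoubleWords,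
    mem_rightDoubleWords, or_and_right, exists_or, and_comm, eq_comm]

theorem eraseDups_of_mem_extremalWords (hw : (a :: w).Nodup) (h : p ∈ extremalWords a w) :
    p.eraseDups = a :: w := by
  rcases mem_extremalWords.1 h with
    ⟨l, k, t, rfl, rfl⟩ | ⟨l, c, k, t, rfl | rfl, rfl⟩
  · exact eraseDups_tripleWord hw
  · exact eraseDups_leftDoubleWord hw
  · exact eraseDups_rightDoubleWord hw

theorem length_of_mem_extremalWords (h : p ∈ extremalWords a w) :
    p.length = 2 * (w.length + 1) + 1 := by
  rcases mem_extremalWords.1 h with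
    ⟨l, k, t, rfl, rfl⟩ | ⟨l, c, k, t, rfl | rfl, rfl⟩ <;>
  · simp only [tripleWord, leftDoubleWord, rightDoubleWord, List.length_cons, List.length_append]
    omega

theorem card_toFinset_of_eraseDups_eq (hw : w.Nodup) (h : p.eraseDups = w) :
    p.toFinset.card = w.length := by
  have hletters : p.toFinset = w.toFinset := by
    ext x
    rw [List.mem_toFinset, ← List.mem_eraseDups, h, List.mem_toFinset]
  rw [hletters, List.toFinset_card_of_nodup hw]

theorem mem_extremalWords_iff_unsortedAfter {m a : ℕ} {w p : List ℕ} (hw : (a :: w).Nodup)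
    (hlen : w.length = m + 2) :
    p ∈ extremalWords a w ↔
      p.eraseDups = a :: w ∧ p.length = 2 * (m + 3) + 1 ∧ UnsortedAfter (m + 2) p := by
  have hcard (h : p.eraseDups = a :: w) : p.toFinset.card = m + 3 := by
    rw [card_toFinset_of_eraseDups_eq hw h, List.length_cons, hlen]
  constructor
  · intro h
    have hdups := eraseDups_of_mem_extremalWords hw h
    have hplen : p.length = 2 * (m + 3) + 1 := by rw [length_of_mem_extremalWords h, hlen]
    refine ⟨hdups, hplen, (unsortedAfter_iff_exists_eq hplen (hcard hdups)).2 ?_⟩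
    rcases mem_extremalWords.1 h with ⟨l, k, t, hp, rfl⟩ | ⟨l, c, k, t, hp, rfl⟩
    · exact .inl ⟨a, l, k, t, hp, hw⟩
    · exact .inr ⟨a, l, c, k, t, hp, hw⟩
  · rintro ⟨hdups, hplen, hunsorted⟩
    rw [mem_extremalWords]
    rcases (unsortedAfter_iff_exists_eq hplen (hcard hdups)).1 hunsorted with
      ⟨b, l, k, t, rfl, hnd⟩ | ⟨b, l, c, k, t, rfl | rfl, hnd⟩
    · rw [eraseDups_tripleWord hnd] at hdups
      obtain ⟨rfl, rfl⟩ := List.cons_eq_cons.1 hdups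
      exact .inl ⟨l, k, t, rfl, rfl⟩
    · rw [eraseDups_leftDoubleWord hnd] at hdups
      obtain ⟨rfl, rfl⟩ := List.cons_eq_cons.1 hdups
      exact .inr ⟨l, c, k, t, .inl rfl, rfl⟩
    · rw [eraseDups_rightDoubleWord hnd] at hdups
      obtain ⟨rfl, rfl⟩ := List.cons_eq_cons.1 hdups
      exact .inr ⟨l, c, k, t, .inr rfl, rfl⟩

end Counting

/-- For n ≥ 3, the number of inequivalent set partition words p with N(p) = n and
|p| = 2n+1 that are not sorted after n-1 applications of φ_{aba} is
C(n+1,2) + 2·C(n,2). -/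
theorem stmt9 (n : ℕ) (hn : 3 ≤ n) :
    Nat.card {p : List ℕ // CanonicalWord p ∧ Nletters p = n ∧ p.length = 2 * n + 1 ∧
      ¬ SortedWord (phi^[n - 1] p)} = Nat.choose (n + 1) 2 + 2 * Nat.choose n 2 := by
  obtain ⟨m, rfl⟩ : ∃ m, n = m + 3 := ⟨n - 3, by omega⟩
  let w := List.range' 1 (m + 2)
  have hrange : 0 :: w = List.range (m + 3) := by
    rw [List.range_eq_range', List.range'_succ]
  have hw : (0 :: w).Nodup := hrange ▸ List.nodup_range
  have hlen : w.length = m + 2 := List.length_range'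
  have hmem (p : List ℕ) : p ∈ extremalWords 0 w ↔ CanonicalWord p ∧ Nletters p = m + 3 ∧
      p.length = 2 * (m + 3) + 1 ∧ ¬ SortedWord (phi^[m + 3 - 1] p) := by
    rw [mem_extremalWords_iff_unsortedAfter hw hlen, hrange,
      ← canonicalWord_and_nletters_eq_iff, and_assoc, not_sortedWord_iterate_phi_iff]
    rfl
  rw [Nat.subtype_card (extremalWords 0 w) hmem, card_extremalWords hw, hlen]
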